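/- Let E1 and E2 be finite equation sets. If E1 is not unifiable and E1 is NSTO, then E1 ∪ E2 is WNSTO. -/

import Mathlib

/-- Finite first-order terms: variables and function applications.
A function symbol is identified by its name together with the number of
arguments it is applied to (fixed arity). -/
inductive Trm : Type where
  | var : ℕ → Trm
  | fn  : ℕ → List Trm → Trm

namespace Trm

/-- `|t|`: the number of occurrences of variables and function symbols
(including constants) in the term `t`. -/
def size : Trm → ℕ
  | .var _ => 1
  | .fn _ ts => 1 + (ts.attach.map (fun ⟨t, _⟩ => size t)).sum
decreasing_by
  have := List.sizeOf_lt_of_mem ‹_ ∈ ts›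
  simp [Trm.fn.sizeOf_spec]; omega

/-- Application of a substitution (a map from variables to terms) to a term. -/
def subst (σ : ℕ → Trm) : Trm → Trm
  | .var x => σ x
  | .fn f ts => .fn f (ts.attach.map (fun ⟨t, _⟩ => subst σ t))
decreasing_by
  have := List.sizeOf_lt_of_mem ‹_ ∈ ts›
  simp [Trm.fn.sizeOf_spec]; omega

/-- The number of occurrences of the variable `x` in a term. -/
def count (x : ℕ) : Trm → ℕ
  | .var y => if y = x then 1 else 0
  | .fn _ ts => (ts.attach.map (fun ⟨t, _⟩ => count x t)).sum
decreasing_by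
  have := List.sizeOf_lt_of_mem ‹_ ∈ ts›
  simp [Trm.fn.sizeOf_spec]; omega

/-- `Occurs x t` : the variable `x` occurs in the term `t`. -/
inductive Occurs (x : ℕ) : Trm → Prop where
  | var : Occurs x (.var x)
  | fn {f : ℕ} {ts : List Trm} {t : Trm} : t ∈ ts → Occurs x t → Occurs x (.fn f ts)

end Trm

/-- The set of variables occurring in a term. -/
def varSet (t : Trm) : Set ℕ := {x | Trm.Occurs x t}

/-- The set of variables occurring in a list (tuple) of terms. -/
def varsL (l : List Trm) : Set ℕ := {x | ∃ t ∈ l, Trm.Occurs x t}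

/-- The number of occurrences of a variable in a list (tuple) of terms. -/
def countL (x : ℕ) (l : List Trm) : ℕ := (l.map (Trm.count x)).sum

/-- A term is ground if no variable occurs in it. -/
def Ground (t : Trm) : Prop := ∀ x, ¬ Trm.Occurs x t

/-- An equation set: a set of equations `s ≐ t` between terms,
represented as pairs of terms. -/
abbrev EqSet := Set (Trm × Trm)

/-- `σ` is a solution (unifier) of the equation set `E`. -/
def Solves (σ : ℕ → Trm) (E : EqSet) : Prop :=
  ∀ e ∈ E, Trm.subst σ e.1 = Trm.subst σ e.2

/-- `E` is unifiable: it has a unifier. -/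
def Unifiable (E : EqSet) : Prop := ∃ σ, Solves σ E

/-- `θ` is a most general unifier of `E`. -/
def IsMgu (θ : ℕ → Trm) (E : EqSet) : Prop :=
  Solves θ E ∧ ∀ σ, Solves σ E → ∃ ρ, ∀ x, σ x = Trm.subst ρ (θ x)

/-- The equation set `s ≐̈ t` pairing corresponding members of two
equal-length tuples of terms. -/
def zipEqs (s t : List Trm) : EqSet := {e | e ∈ s.zip t}

/-- The substitution `{X/t}` mapping `X` to `t` and every other variable
to itself. -/
def single (X : ℕ) (t : Trm) : ℕ → Trm :=
  fun y => if y = X then t else .var y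

/-- The equation set `Eθ`: the substitution applied to both sides of
every equation of `E`. -/
def substE (θ : ℕ → Trm) (E : EqSet) : EqSet :=
  (fun e => (Trm.subst θ e.1, Trm.subst θ e.2)) '' E

/-- One step of the Martelli–Montanari algorithm MMA: actions (1), (3), (4),
(5).  (Actions (2) and (6) halt with failure and produce no next equation
set; their applicability is captured by `ClashApp` and `OccApp` below.)
Two function applications carry the same function symbol iff they have the
same name and the same number of arguments (fixed arity). -/
inductive MMAStep : EqSet → EqSet → Prop where
  /-- Action (1): replace `f(s1,…,sn) ≐ f(t1,…,tn)` by `s1 ≐ t1, …, sn ≐ tn`. -/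
  | decomp {E : EqSet} {f : ℕ} {sl tl : List Trm} :
      (Trm.fn f sl, Trm.fn f tl) ∈ E → sl.length = tl.length →
      MMAStep E ((E \ {(Trm.fn f sl, Trm.fn f tl)}) ∪ {e | e ∈ sl.zip tl})
  /-- Action (3): delete an equation `X ≐ X`. -/
  | delete {E : EqSet} {x : ℕ} :
      (Trm.var x, Trm.var x) ∈ E →
      MMAStep E (E \ {(Trm.var x, Trm.var x)})
  /-- Action (4): replace `t ≐ X` (`t` not a variable) by `X ≐ t`. -/
  | flip {E : EqSet} {t : Trm} {x : ℕ} :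
      (t, Trm.var x) ∈ E → (∀ y, t ≠ Trm.var y) →
      MMAStep E ((E \ {(t, Trm.var x)}) ∪ {(Trm.var x, t)})
  /-- Action (5): on `X ≐ t` with `X ∉ Var(t)` and `X` occurring elsewhere,
  apply `{X/t}` to all other equations. -/
  | elim {E : EqSet} {x : ℕ} {t : Trm} :
      (Trm.var x, t) ∈ E → ¬ Trm.Occurs x t →
      (∃ e ∈ E \ {(Trm.var x, t)}, Trm.Occurs x e.1 ∨ Trm.Occurs x e.2) →
      MMAStep E ({(Trm.var x, t)} ∪ substE (single x t) (E \ {(Trm.var x, t)}))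

/-- Action (2) is applicable to `E`: `E` contains an equation
`f(s1,…,sn) ≐ g(t1,…,tm)` where the two function symbols differ. -/
def ClashApp (E : EqSet) : Prop :=
  ∃ f sl g tl, (Trm.fn f sl, Trm.fn g tl) ∈ E ∧
    (f ≠ g ∨ sl.length ≠ tl.length)

/-- Action (6) (the occur-check) is applicable to `E`: `E` contains an
equation `X ≐ t` with `X ∈ Var(t)` and `X ≠ t`. -/
def OccApp (E : EqSet) : Prop :=
  ∃ x t, (Trm.var x, t) ∈ E ∧ Trm.Occurs x t ∧ t ≠ Trm.var x

/-- One step of the algorithm MMA⁻ (MMA without the occur-check):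
actions (1), (3), (4), (5a), (5b). -/
inductive MMAmStep : EqSet → EqSet → Prop where
  /-- Action (1). -/
  | decomp {E : EqSet} {f : ℕ} {sl tl : List Trm} :
      (Trm.fn f sl, Trm.fn f tl) ∈ E → sl.length = tl.length →
      MMAmStep E ((E \ {(Trm.fn f sl, Trm.fn f tl)}) ∪ {e | e ∈ sl.zip tl})
  /-- Action (3). -/
  | delete {E : EqSet} {x : ℕ} :
      (Trm.var x, Trm.var x) ∈ E →
      MMAmStep E (E \ {(Trm.var x, Trm.var x)})
  /-- Action (4). -/
  | flip {E : EqSet} {t : Trm} {x : ℕ} :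
      (t, Trm.var x) ∈ E → (∀ y, t ≠ Trm.var y) →
      MMAmStep E ((E \ {(t, Trm.var x)}) ∪ {(Trm.var x, t)})
  /-- Action (5a): on `X ≐ Y` with `X, Y` distinct variables and `X`
  occurring elsewhere, apply `{X/Y}` to all other equations. -/
  | elimVar {E : EqSet} {x y : ℕ} :
      (Trm.var x, Trm.var y) ∈ E → x ≠ y →
      (∃ e ∈ E \ {(Trm.var x, Trm.var y)}, Trm.Occurs x e.1 ∨ Trm.Occurs x e.2) →
      MMAmStep E
        ({(Trm.var x, Trm.var y)} ∪
          substE (single x (Trm.var y)) (E \ {(Trm.var x, Trm.var y)}))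
  /-- Action (5b): on `X ≐ t`, `X ≐ u` with `t, u` distinct non-variable
  terms and `|t| ≤ |u|`, replace `X ≐ u` by `t ≐ u`. -/
  | merge {E : EqSet} {x : ℕ} {t u : Trm} :
      (Trm.var x, t) ∈ E → (Trm.var x, u) ∈ E → t ≠ u →
      (∀ y, t ≠ Trm.var y) → (∀ y, u ≠ Trm.var y) → t.size ≤ u.size →
      MMAmStep E ((E \ {(Trm.var x, u)}) ∪ {(t, u)})

/-- `F` is reachable from `E` by (non-failing) actions of MMA. -/
def Reachable (E F : EqSet) : Prop := Relation.ReflTransGen MMAStep E F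

/-- `E` is NSTO: no run of MMA on `E` performs action (6), i.e. the
occur-check action is never applicable along any run. -/
def NSTO (E : EqSet) : Prop := ∀ F, Reachable E F → ¬ OccApp F

/-- `E` is WNSTO: there exists an occur-check free run of MMA on `E`, i.e. a
maximal run that either halts with failure by action (2), or ends with an
equation set to which no action (including (2) and (6)) applies — without
ever performing action (6). -/
def WNSTO (E : EqSet) : Prop :=
  ∃ F, Reachable E F ∧
    (ClashApp F ∨ (¬ ClashApp F ∧ ¬ OccApp F ∧ ∀ F', ¬ MMAStep F F'))

/-
Adding equations to an equation set never blocks an action of MMA, so a run on `E1` that ends in a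
clash can be copied step by step on `E1 ∪ E2`, where it ends in the same clash before any
occur-check. Such a run exists: MMA terminates on the finite set `E1`, its occur-check is never
applicable there, and an end without clash would be a set in solved form. As the actions create no
new solutions, the unifier read off that set would also unify `E1`.
-/

namespace Trm

@[elab_as_elim, induction_eliminator]
theorem induction {P : Trm → Prop} (var : ∀ x, P (.var x))
    (fn : ∀ f ts, (∀ t ∈ ts, P t) → P (.fn f ts)) : ∀ t, P t
  | .var x => var x
  | .fn f ts => fn f ts fun t _ => induction var fn t

@[simp]
theorem subst_var (σ : ℕ → Trm) (x : ℕ) : subst σ (.var x) = σ x := by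
  simp [subst]

@[simp]
theorem subst_fn (σ : ℕ → Trm) (f : ℕ) (ts : List Trm) :
    subst σ (.fn f ts) = .fn f (ts.map (subst σ)) := by
  simp [subst]

theorem subst_eq_self {σ : ℕ → Trm} {t : Trm} (h : ∀ x ∈ varSet t, σ x = .var x) :
    subst σ t = t := by
  induction t with
  | var x => simpa using h x .var
  | fn f ts ih =>
    rw [subst_fn, List.map_congr_left fun t ht => ih t ht fun x hx => h x (.fn ht hx),
      List.map_id']

theorem subst_subst (σ τ : ℕ → Trm) (t : Trm) :
    subst σ (subst τ t) = subst (fun x => subst σ (τ x)) t := by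
  induction t with
  | var x => simp only [subst_var]
  | fn f ts ih =>
    simp only [subst_fn, List.map_map]
    exact congrArg (fn f) (List.map_congr_left ih)

theorem subst_subst_single {σ : ℕ → Trm} {x : ℕ} {t : Trm} (h : σ x = subst σ t) (s : Trm) :
    subst σ (subst (single x t) s) = subst σ s := by
  have hσ : (fun y => subst σ (single x t y)) = σ := by
    funext y
    by_cases hy : y = x <;> simp [single, hy, h]
  rw [subst_subst, hσ]

/-- The weight of a term: each variable counts `1` and each function symbol counts `2`, so that
even a constant outweighs a variable. Serves to define the termination measure `mmaMeasure`. -/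
def weight : Trm → ℕ
  | .var _ => 1
  | .fn _ ts => 2 + (ts.map weight).sum

theorem one_lt_weight {t : Trm} (ht : ∀ y, t ≠ .var y) : 1 < t.weight := by
  cases t with
  | var x => exact absurd rfl (ht x)
  | fn f ts => rw [weight]; lia

end Trm

theorem varSet_var (x : ℕ) : varSet (.var x) = {x} := by
  ext y
  exact ⟨fun h => by cases h; rfl, fun h => h ▸ .var⟩

theorem varSet_fn (f : ℕ) (ts : List Trm) : varSet (.fn f ts) = ⋃ t ∈ ts, varSet t := by
  ext x
  simp only [Set.mem_iUnion, exists_prop]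
  exact ⟨fun h => by cases h with | fn ht hx => exact ⟨_, ht, hx⟩, fun ⟨_, ht, hx⟩ => .fn ht hx⟩

theorem finite_varSet (t : Trm) : (varSet t).Finite := by
  induction t with
  | var x => rw [varSet_var]; exact Set.finite_singleton x
  | fn f ts ih => rw [varSet_fn]; exact ts.finite_toSet.biUnion ih

theorem varSet_subst (σ : ℕ → Trm) (t : Trm) :
    varSet (t.subst σ) = ⋃ x ∈ varSet t, varSet (σ x) := by
  induction t with
  | var x => simp [varSet_var]
  | fn f ts ih =>
    ext y
    simp only [Trm.subst_fn, varSet_fn, List.mem_map, Set.mem_iUnion, exists_prop]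
    constructor
    · rintro ⟨_, ⟨t, ht, rfl⟩, hy⟩
      rw [ih t ht] at hy
      simp only [Set.mem_iUnion, exists_prop] at hy
      obtain ⟨x, hx, hy⟩ := hy
      exact ⟨x, ⟨t, ht, hx⟩, hy⟩
    · rintro ⟨x, ⟨t, ht, hx⟩, hy⟩
      refine ⟨_, ⟨t, ht, rfl⟩, ?_⟩
      rw [ih t ht]
      exact Set.mem_biUnion hx hy

theorem varSet_subst_single_subset (x : ℕ) (t s : Trm) :
    varSet (s.subst (single x t)) ⊆ varSet t ∪ varSet s \ {x} := by
  rw [varSet_subst]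
  refine Set.iUnion₂_subset fun y hy z hz => ?_
  by_cases hyx : y = x
  · exact .inl (by simpa [single, hyx] using hz)
  · obtain rfl : z = y := by simpa [single, hyx, varSet_var] using hz
    exact .inr ⟨hy, hyx⟩

/-- The set of variables occurring in an equation. -/
def eqnVars (e : Trm × Trm) : Set ℕ := varSet e.1 ∪ varSet e.2

/-- The set of variables occurring in an equation set. -/
def eqSetVars (E : EqSet) : Set ℕ := ⋃ e ∈ E, eqnVars e

theorem finite_eqSetVars {E : EqSet} (hE : E.Finite) : (eqSetVars E).Finite :=
  hE.biUnion fun e _ => (finite_varSet e.1).union (finite_varSet e.2)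

theorem eqnVars_subset_eqSetVars {E : EqSet} {e : Trm × Trm} (he : e ∈ E) :
    eqnVars e ⊆ eqSetVars E :=
  Set.subset_biUnion_of_mem he

theorem mem_eqSetVars {E : EqSet} {e : Trm × Trm} {x : ℕ} (he : e ∈ E) (hx : x ∈ eqnVars e) :
    x ∈ eqSetVars E :=
  eqnVars_subset_eqSetVars he hx

theorem eqSetVars_mono {E F : EqSet} (h : E ⊆ F) : eqSetVars E ⊆ eqSetVars F :=
  Set.biUnion_subset_biUnion_left h

theorem eqSetVars_union (E F : EqSet) : eqSetVars (E ∪ F) = eqSetVars E ∪ eqSetVars F :=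
  Set.biUnion_union E F eqnVars

theorem eqSetVars_singleton (e : Trm × Trm) : eqSetVars {e} = eqnVars e :=
  Set.biUnion_singleton e eqnVars

theorem eqSetVars_substE_single_subset (x : ℕ) (t : Trm) (E : EqSet) :
    eqSetVars (substE (single x t) E) ⊆ varSet t ∪ eqSetVars E \ {x} := by
  refine Set.iUnion₂_subset ?_
  rintro _ ⟨e, he, rfl⟩
  have hside {s : Trm} (hs : varSet s ⊆ eqnVars e) :
      varSet (s.subst (single x t)) ⊆ varSet t ∪ eqSetVars E \ {x} :=
    (varSet_subst_single_subset x t s).trans <| Set.union_subset_union_right _ <|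
      Set.sdiff_subset_sdiff_left (hs.trans (eqnVars_subset_eqSetVars he))
  exact Set.union_subset (hside Set.subset_union_left) (hside Set.subset_union_right)

/-- The equation `X ≐ t` is in solved form in `E`: it belongs to `E`, `X` does not occur in `t`,
and `X` does not occur in any other equation of `E`. -/
def SolvedBy (E : EqSet) (x : ℕ) (t : Trm) : Prop :=
  (Trm.var x, t) ∈ E ∧ x ∉ varSet t ∧ x ∉ eqSetVars (E \ {(Trm.var x, t)})

/-- The variables of `E` that have no equation in solved form. -/
def unsolvedVars (E : EqSet) : Set ℕ := eqSetVars E \ {x | ∃ t, SolvedBy E x t}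

theorem finite_unsolvedVars {E : EqSet} (hE : E.Finite) : (unsolvedVars E).Finite :=
  (finite_eqSetVars hE).sdiff

theorem SolvedBy.eq_of_mem {E : EqSet} {x : ℕ} {t u : Trm} (h : SolvedBy E x t)
    (hu : (Trm.var x, u) ∈ E) : u = t := by
  by_contra hne
  exact h.2.2 (mem_eqSetVars (e := (.var x, u)) ⟨hu, by simpa using hne⟩ (.inl .var))

theorem unifiable_of_forall_solvedBy {E : EqSet}
    (h : ∀ e ∈ E, ∃ x t, e = (Trm.var x, t) ∧ SolvedBy E x t) : Unifiable E := by
  classical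
  let σ : ℕ → Trm := fun x => if hx : ∃ t, SolvedBy E x t then hx.choose else .var x
  refine ⟨σ, fun e he => ?_⟩
  obtain ⟨x, t, rfl, hx⟩ := h e he
  have hσx : σ x = t := by
    have hex : ∃ t, SolvedBy E x t := ⟨t, hx⟩
    simpa only [σ, dif_pos hex] using hx.eq_of_mem hex.choose_spec.1
  have hσt : t.subst σ = t := by
    refine Trm.subst_eq_self fun y hy => dif_neg ?_
    rintro ⟨u, hu⟩
    refine hu.2.2 (mem_eqSetVars (e := (.var x, t)) ⟨he, ?_⟩ (.inr hy))
    rintro ⟨rfl, rfl⟩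
    exact hx.2.1 hy
  simp only [Trm.subst_var, hσx, hσt]

/-- The actions (1), (3) and (4) of MMA, which act on a single equation: `Replacement e Z` says
that one of them replaces the equation `e` by the equations in `Z`. -/
inductive Replacement : Trm × Trm → EqSet → Prop where
  | decomp {f : ℕ} {sl tl : List Trm} :
      sl.length = tl.length → Replacement (.fn f sl, .fn f tl) {e | e ∈ sl.zip tl}
  | delete {x : ℕ} : Replacement (.var x, .var x) ∅
  | flip {t : Trm} {x : ℕ} :
      (∀ y, t ≠ .var y) → Replacement (t, .var x) {(.var x, t)}

theorem MMAStep.replacement_or_elim {E E' : EqSet} (h : MMAStep E E') :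
    (∃ e ∈ E, ∃ Z, Replacement e Z ∧ E' = E \ {e} ∪ Z) ∨
      ∃ x t, (Trm.var x, t) ∈ E ∧ x ∉ varSet t ∧ x ∈ eqSetVars (E \ {(Trm.var x, t)}) ∧
        E' = {(Trm.var x, t)} ∪ substE (single x t) (E \ {(Trm.var x, t)}) := by
  cases h with
  | decomp he hlen => exact .inl ⟨_, he, _, .decomp hlen, rfl⟩
  | delete he => exact .inl ⟨_, he, _, .delete, (Set.union_empty _).symm⟩
  | flip he ht => exact .inl ⟨_, he, _, .flip ht, rfl⟩
  | elim he hx hocc =>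
    obtain ⟨e, he', hxe⟩ := hocc
    exact .inr ⟨_, _, he, hx, Set.mem_biUnion he' hxe, rfl⟩

section Replacement

variable {e : Trm × Trm} {Z E : EqSet}

theorem Replacement.finite (h : Replacement e Z) : Z.Finite := by
  cases h with
  | decomp => exact List.finite_toSet _
  | delete => exact Set.finite_empty
  | flip => exact Set.finite_singleton _

theorem Replacement.eqSetVars_subset (h : Replacement e Z) : eqSetVars Z ⊆ eqnVars e := by
  cases h with
  | decomp =>
    refine Set.iUnion₂_subset fun p hp => ?_
    obtain ⟨hs, ht⟩ := List.of_mem_zip hp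
    exact Set.union_subset_union (fun _ => .fn hs) (fun _ => .fn ht)
  | delete => simp [eqSetVars]
  | flip => rw [eqSetVars_singleton, eqnVars, Set.union_comm]; rfl

theorem Replacement.not_solvedBy {x : ℕ} {t : Trm} (h : Replacement (.var x, t) Z) :
    ¬ SolvedBy E x t := by
  rintro ⟨-, hx, -⟩
  cases h with
  | delete => exact hx .var
  | flip ht => exact ht x rfl

theorem Replacement.solves {σ : ℕ → Trm} (h : Replacement e Z) (hσ : Solves σ Z) :
    e.1.subst σ = e.2.subst σ := by
  cases h with
  | @decomp f sl tl hlen =>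
    have hall : List.Forall₂ (fun s t => s.subst σ = t.subst σ) sl tl :=
      List.forall₂_iff_zip.2 ⟨hlen, fun hp => hσ _ hp⟩
    have hmap : sl.map (Trm.subst σ) = tl.map (Trm.subst σ) := by
      rwa [← List.forall₂_eq_eq_eq, List.forall₂_map_left_iff, List.forall₂_map_right_iff]
    simp only [Trm.subst_fn, hmap]
  | delete => rfl
  | flip => exact (hσ _ rfl).symm

theorem Replacement.unsolvedVars_subset (h : Replacement e Z) (he : e ∈ E) :
    unsolvedVars (E \ {e} ∪ Z) ⊆ unsolvedVars E := by
  have hZ : eqSetVars Z ⊆ eqnVars e := h.eqSetVars_subset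
  rintro x ⟨hx, hns⟩
  refine ⟨?_, ?_⟩
  · rw [eqSetVars_union] at hx
    exact hx.elim (eqSetVars_mono Set.sdiff_subset ·)
      fun hx => mem_eqSetVars he (hZ hx)
  · rintro ⟨t, hs⟩
    have hne : (Trm.var x, t) ≠ e := fun heq => (heq ▸ h).not_solvedBy hs
    have hxe : x ∉ eqnVars e := fun hx => hs.2.2 (mem_eqSetVars ⟨he, hne.symm⟩ hx)
    refine hns ⟨t, .inl ⟨hs.1, hne⟩, hs.2.1, fun hx => ?_⟩
    rw [Set.union_sdiff_distrib, eqSetVars_union] at hx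
    rcases hx with hx | hx
    · exact hs.2.2 (eqSetVars_mono (Set.sdiff_subset_sdiff_left Set.sdiff_subset) hx)
    · exact hxe (hZ (eqSetVars_mono Set.sdiff_subset hx))

end Replacement

section Elimination

variable {E : EqSet} {x : ℕ} {t : Trm}

theorem solvedBy_elim (hx : x ∉ varSet t) (D : EqSet) :
    SolvedBy ({(Trm.var x, t)} ∪ substE (single x t) D) x t := by
  refine ⟨.inl rfl, hx, fun hmem => ?_⟩
  rw [Set.union_sdiff_left] at hmem
  rcases eqSetVars_substE_single_subset x t D (eqSetVars_mono Set.sdiff_subset hmem) with h | h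
  · exact hx h
  · exact h.2 rfl

theorem SolvedBy.elim {y : ℕ} {u : Trm} (hy : SolvedBy E y u) (hyx : y ≠ x)
    (he : (Trm.var x, t) ∈ E) :
    SolvedBy ({(Trm.var x, t)} ∪ substE (single x t) (E \ {(Trm.var x, t)})) y
      (u.subst (single x t)) := by
  obtain ⟨hmem, hyu, hyE⟩ := hy
  have hne : (Trm.var y, u) ≠ (Trm.var x, t) := by simp [hyx]
  have hyet : y ∉ eqnVars (Trm.var x, t) := fun h =>
    hyE (mem_eqSetVars ⟨he, hne.symm⟩ h)
  have hyt : y ∉ varSet t := fun h => hyet (.inr h)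
  have himage : (Trm.var y, u.subst (single x t)) =
      (Trm.subst (single x t) (.var y), Trm.subst (single x t) u) := by simp [single, hyx]
  refine ⟨.inr ⟨(Trm.var y, u), ⟨hmem, hne⟩, himage.symm⟩, fun h => ?_, fun h => ?_⟩
  · exact (varSet_subst_single_subset x t u h).elim hyt fun h => hyu h.1
  · have hsub : ({(Trm.var x, t)} ∪ substE (single x t) (E \ {(Trm.var x, t)})) \
        {(Trm.var y, u.subst (single x t))} ⊆
        {(Trm.var x, t)} ∪ substE (single x t) (E \ {(Trm.var y, u)}) := by
      rintro _ ⟨hp | ⟨p, hp, rfl⟩, hpne⟩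
      · exact .inl hp
      · refine .inr ⟨p, ⟨hp.1, ?_⟩, rfl⟩
        rintro rfl
        exact hpne himage.symm
    have hvars := eqSetVars_mono hsub h
    rw [eqSetVars_union, eqSetVars_singleton] at hvars
    exact (eqSetVars_substE_single_subset x t _ (hvars.resolve_left hyet)).elim hyt
      fun h => hyE h.1

theorem eqSetVars_elim_subset (he : (Trm.var x, t) ∈ E) :
    eqSetVars ({(Trm.var x, t)} ∪ substE (single x t) (E \ {(Trm.var x, t)})) ⊆ eqSetVars E := by
  have hvars : eqnVars (Trm.var x, t) ⊆ eqSetVars E := eqnVars_subset_eqSetVars he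
  rw [eqSetVars_union, eqSetVars_singleton]
  refine Set.union_subset hvars ((eqSetVars_substE_single_subset x t _).trans ?_)
  exact Set.union_subset (Set.subset_union_right.trans hvars)
    (Set.sdiff_subset.trans (eqSetVars_mono Set.sdiff_subset))

theorem unsolvedVars_elim_ssubset (he : (Trm.var x, t) ∈ E) (hx : x ∉ varSet t)
    (hocc : x ∈ eqSetVars (E \ {(Trm.var x, t)})) :
    unsolvedVars ({(Trm.var x, t)} ∪ substE (single x t) (E \ {(Trm.var x, t)})) ⊂
      unsolvedVars E := by
  have hxE : x ∈ unsolvedVars E := by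
    refine ⟨eqSetVars_mono Set.sdiff_subset hocc, ?_⟩
    rintro ⟨u, hu⟩
    obtain rfl := hu.eq_of_mem he
    exact hu.2.2 hocc
  have hxs := solvedBy_elim hx (E \ {(Trm.var x, t)})
  refine (Set.ssubset_iff_of_subset ?_).2 ⟨x, hxE, fun h => h.2 ⟨t, hxs⟩⟩
  rintro y ⟨hy, hns⟩
  refine ⟨eqSetVars_elim_subset he hy, ?_⟩
  rintro ⟨u, hu⟩
  rcases eq_or_ne y x with rfl | hyx
  · exact hns ⟨t, hxs⟩
  · exact hns ⟨_, hu.elim hyx he⟩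

end Elimination

/-- The weight of an equation. The left side counts twice, so that action (4) lowers it. -/
def eqnWeight (e : Trm × Trm) : ℕ := 2 * e.1.weight + e.2.weight

/-- The total weight of the equations of a finite equation set; the value is junk on infinite
sets. -/
noncomputable def eqSetWeight (E : EqSet) : ℕ := ∑ᶠ e ∈ E, eqnWeight e

theorem eqSetWeight_singleton (e : Trm × Trm) : eqSetWeight {e} = eqnWeight e :=
  finsum_mem_singleton

theorem eqSetWeight_union_le {E F : EqSet} (hE : E.Finite) (hF : F.Finite) :
    eqSetWeight (E ∪ F) ≤ eqSetWeight E + eqSetWeight F :=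
  (Nat.le_add_right _ _).trans_eq (finsum_mem_union_inter hE hF)

theorem eqnWeight_add_eqSetWeight_sdiff {E : EqSet} (hE : E.Finite) {e : Trm × Trm}
    (he : e ∈ E) : eqnWeight e + eqSetWeight (E \ {e}) = eqSetWeight E := by
  have h := finsum_mem_add_sdiff (f := eqnWeight) (Set.singleton_subset_iff.2 he) hE
  rwa [finsum_mem_singleton] at h

theorem eqSetWeight_setOf_mem_le (l : List (Trm × Trm)) :
    eqSetWeight {e | e ∈ l} ≤ (l.map eqnWeight).sum := by
  induction l with
  | nil => simp [eqSetWeight]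
  | cons e l ih =>
    have hcons : {a | a ∈ e :: l} = {e} ∪ {a | a ∈ l} := by ext; simp
    calc eqSetWeight {a | a ∈ e :: l}
        ≤ eqSetWeight {e} + eqSetWeight {a | a ∈ l} :=
          hcons ▸ eqSetWeight_union_le (Set.finite_singleton e) l.finite_toSet
      _ ≤ ((e :: l).map eqnWeight).sum := by
          rw [eqSetWeight_singleton, List.map_cons, List.sum_cons]
          exact Nat.add_le_add_left ih _

theorem sum_map_eqnWeight_zip {sl tl : List Trm} (hlen : sl.length = tl.length) :
    ((sl.zip tl).map eqnWeight).sum =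
      2 * (sl.map Trm.weight).sum + (tl.map Trm.weight).sum := by
  induction sl generalizing tl with
  | nil => simp [List.eq_nil_of_length_eq_zero hlen.symm]
  | cons s sl ih =>
    obtain ⟨t, tl, rfl⟩ := List.exists_cons_of_length_eq_add_one hlen.symm
    have := ih (Nat.succ.inj hlen)
    simp only [List.zip_cons_cons, List.map_cons, List.sum_cons, eqnWeight, this]
    lia

theorem Replacement.eqSetWeight_lt {e : Trm × Trm} {Z : EqSet} (h : Replacement e Z) :
    eqSetWeight Z < eqnWeight e := by
  cases h with
  | @decomp f sl tl hlen =>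
    calc eqSetWeight {e | e ∈ sl.zip tl}
        ≤ 2 * (sl.map Trm.weight).sum + (tl.map Trm.weight).sum :=
          (eqSetWeight_setOf_mem_le _).trans_eq (sum_map_eqnWeight_zip hlen)
      _ < eqnWeight (.fn f sl, .fn f tl) := by simp only [eqnWeight, Trm.weight]; lia
  | delete => simp [eqSetWeight, eqnWeight, Trm.weight]
  | flip ht =>
    have := Trm.one_lt_weight ht
    simp only [eqSetWeight_singleton, eqnWeight, Trm.weight]
    lia

theorem Replacement.eqSetWeight_sdiff_union_lt {e : Trm × Trm} {Z E : EqSet}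
    (h : Replacement e Z) (hE : E.Finite) (he : e ∈ E) :
    eqSetWeight (E \ {e} ∪ Z) < eqSetWeight E :=
  calc eqSetWeight (E \ {e} ∪ Z)
      ≤ eqSetWeight (E \ {e}) + eqSetWeight Z := eqSetWeight_union_le hE.sdiff h.finite
    _ < eqSetWeight (E \ {e}) + eqnWeight e := Nat.add_lt_add_left h.eqSetWeight_lt _
    _ = eqSetWeight E := by rw [add_comm, eqnWeight_add_eqSetWeight_sdiff hE he]

/-- The termination measure of MMA on finite equation sets: the number of unsolved variables, then
the total weight, compared lexicographically. -/
noncomputable def mmaMeasure (E : EqSet) : ℕ ×ₗ ℕ :=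
  toLex ((unsolvedVars E).ncard, eqSetWeight E)

namespace MMAStep

variable {E E' : EqSet}

theorem finite (h : MMAStep E E') (hE : E.Finite) : E'.Finite := by
  rcases h.replacement_or_elim with ⟨e, -, Z, hZ, rfl⟩ | ⟨x, t, -, -, -, rfl⟩
  · exact hE.sdiff.union hZ.finite
  · exact (Set.finite_singleton _).union (hE.sdiff.image _)

theorem mmaMeasure_lt (h : MMAStep E E') (hE : E.Finite) : mmaMeasure E' < mmaMeasure E := by
  have hfin : (unsolvedVars E).Finite := finite_unsolvedVars hE
  rcases h.replacement_or_elim with ⟨e, he, Z, hZ, rfl⟩ | ⟨x, t, he, hx, hocc, rfl⟩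
  · exact Prod.Lex.toLex_lt_toLex'.2 ⟨Set.ncard_le_ncard (hZ.unsolvedVars_subset he) hfin,
      fun _ => hZ.eqSetWeight_sdiff_union_lt hE he⟩
  · exact Prod.Lex.toLex_lt_toLex.2 <| .inl <|
      Set.ncard_lt_ncard (unsolvedVars_elim_ssubset he hx hocc) hfin

theorem solves {σ : ℕ → Trm} (h : MMAStep E E') (hσ : Solves σ E') : Solves σ E := by
  intro p hp
  rcases h.replacement_or_elim with ⟨e, -, Z, hZ, rfl⟩ | ⟨x, t, -, -, -, rfl⟩
  · rcases eq_or_ne p e with rfl | hne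
    · exact hZ.solves fun q hq => hσ q (.inr hq)
    · exact hσ p (.inl ⟨hp, hne⟩)
  · have hx : σ x = t.subst σ := by simpa using hσ (.var x, t) (.inl rfl)
    rcases eq_or_ne p (.var x, t) with rfl | hne
    · exact hσ _ (.inl rfl)
    · simpa only [Trm.subst_subst_single hx] using hσ _ (.inr ⟨p, ⟨hp, hne⟩, rfl⟩)

theorem exists_of_subset {G : EqSet} (h : MMAStep E E') (hEG : E ⊆ G) :
    ∃ G', MMAStep G G' ∧ E' ⊆ G' := by
  have hdiff (e : Trm × Trm) : E \ {e} ⊆ G \ {e} := Set.sdiff_subset_sdiff_left hEG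
  cases h with
  | decomp he hlen =>
    exact ⟨_, .decomp (hEG he) hlen, Set.union_subset_union_left _ (hdiff _)⟩
  | delete he => exact ⟨_, .delete (hEG he), hdiff _⟩
  | flip he ht => exact ⟨_, .flip (hEG he) ht, Set.union_subset_union_left _ (hdiff _)⟩
  | elim he hx hocc =>
    exact ⟨_, .elim (hEG he) hx (hocc.imp fun _ => .imp_left (hdiff _ ·)),
      Set.union_subset_union_right _ (Set.image_mono (hdiff _))⟩

end MMAStep

namespace Reachable

variable {E F : EqSet}

theorem finite (h : Reachable E F) (hE : E.Finite) : F.Finite := by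
  induction h with
  | refl => exact hE
  | tail _ hstep ih => exact hstep.finite ih

theorem solves {σ : ℕ → Trm} (h : Reachable E F) (hσ : Solves σ F) : Solves σ E := by
  induction h with
  | refl => exact hσ
  | tail _ hstep ih => exact ih (hstep.solves hσ)

theorem exists_of_subset {G : EqSet} (h : Reachable E F) (hEG : E ⊆ G) :
    ∃ G', Reachable G G' ∧ F ⊆ G' := by
  induction h with
  | refl => exact ⟨G, .refl, hEG⟩
  | tail _ hstep ih =>
    obtain ⟨G', hG', hsub⟩ := ih
    obtain ⟨G'', hstep', hsub'⟩ := hstep.exists_of_subset hsub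
    exact ⟨G'', hG'.tail hstep', hsub'⟩

end Reachable

theorem ClashApp.mono {E F : EqSet} (h : ClashApp E) (hEF : E ⊆ F) : ClashApp F := by
  obtain ⟨f, sl, g, tl, hmem, hne⟩ := h
  exact ⟨f, sl, g, tl, hEF hmem, hne⟩

theorem exists_reachable_forall_not_mmaStep {E : EqSet} (hE : E.Finite) :
    ∃ F, Reachable E F ∧ ∀ F', ¬ MMAStep F F' := by
  obtain ⟨F, hF, hmin⟩ := exists_minimalFor_of_wellFoundedLT (Reachable E) mmaMeasure ⟨E, .refl⟩
  refine ⟨F, hF, fun F' hstep => ?_⟩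
  have hlt := hstep.mmaMeasure_lt (hF.finite hE)
  exact hlt.not_ge (hmin (hF.tail hstep) hlt.le)

theorem unifiable_of_forall_not_mmaStep {E : EqSet} (hclash : ¬ ClashApp E) (hocc : ¬ OccApp E)
    (hstep : ∀ E', ¬ MMAStep E E') : Unifiable E := by
  refine unifiable_of_forall_solvedBy ?_
  rintro ⟨s, t⟩ he
  cases s with
  | var x =>
    have ht : t ≠ .var x := by
      rintro rfl
      exact hstep _ (.delete he)
    have hx : x ∉ varSet t := fun h => hocc ⟨x, t, he, h, ht⟩
    refine ⟨x, t, rfl, he, hx, fun h => ?_⟩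
    obtain ⟨e, he', hxe⟩ := Set.mem_iUnion₂.1 h
    exact hstep _ (.elim he hx ⟨e, he', hxe⟩)
  | fn f sl =>
    cases t with
    | var x => exact absurd (.flip he (by simp)) (hstep _)
    | fn g tl =>
      by_cases hfg : f = g ∧ sl.length = tl.length
      · obtain ⟨rfl, hlen⟩ := hfg
        exact absurd (.decomp he hlen) (hstep _)
      · exact absurd ⟨f, sl, g, tl, he, not_and_or.1 hfg⟩ hclash

theorem NSTO.wnsto {E : EqSet} (h : NSTO E) (hE : E.Finite) : WNSTO E := by
  obtain ⟨F, hF, hstep⟩ := exists_reachable_forall_not_mmaStep hE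
  by_cases hclash : ClashApp F
  · exact ⟨F, hF, .inl hclash⟩
  · exact ⟨F, hF, .inr ⟨hclash, h F hF, hstep⟩⟩

theorem WNSTO.exists_clashApp {E : EqSet} (h : WNSTO E) (hnu : ¬ Unifiable E) :
    ∃ F, Reachable E F ∧ ClashApp F := by
  obtain ⟨F, hF, hclash | ⟨hclash, hocc, hstep⟩⟩ := h
  · exact ⟨F, hF, hclash⟩
  · obtain ⟨σ, hσ⟩ := unifiable_of_forall_not_mmaStep hclash hocc hstep
    exact absurd ⟨σ, hF.solves hσ⟩ hnu

theorem stmt9_general (E1 E2 : EqSet) (hnu : ¬ Unifiable E1) (hw : WNSTO E1) :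
    WNSTO (E1 ∪ E2) := by
  obtain ⟨F, hF, hclash⟩ := hw.exists_clashApp hnu
  obtain ⟨G, hG, hFG⟩ := hF.exists_of_subset (Set.subset_union_left (t := E2))
  exact ⟨G, hG, .inl (hclash.mono hFG)⟩

/-- Let `E1` and `E2` be finite equation sets.  If `E1` is not unifiable and
`E1` is NSTO, then `E1 ∪ E2` is WNSTO. -/
theorem stmt9 (E1 E2 : EqSet) (h1 : E1.Finite) (h2 : E2.Finite)
    (hnu : ¬ Unifiable E1) (hnsto : NSTO E1) :
    WNSTO (E1 ∪ E2) :=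
  stmt9_general E1 E2 hnu (hnsto.wnsto h1)
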